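/- For every n ≥ 0, the n-th Stirling coefficient γ_n satisfies γ_n = Σ_{k=0}^{2n} ((−1)^n 2^n Γ(n+k+1/2)/√π) Σ_{j=0}^k (2^j/(k−j)!) Σ_{i=0}^j ((−1)^i S(2n+j+i, i)/((j−i)! (2n+j+i)!)). -/

import Mathlib

open Finset

/-- The unsigned Stirling numbers of the first kind. -/
def stirling1 : ℕ → ℕ → ℕ
  | 0, 0 => 1
  | 0, _ + 1 => 0
  | _ + 1, 0 => 0
  | n + 1, j + 1 => stirling1 n j + n * stirling1 n (j + 1)

/-- Generalized binomial coefficient `C(ρ, k) = ρ(ρ-1)⋯(ρ-k+1)/k!` for real `ρ`. -/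
noncomputable def gbinomR (ρ : ℝ) (k : ℕ) : ℝ :=
  (∏ i ∈ Finset.range k, (ρ - i)) / (Nat.factorial k : ℝ)

/-- The formal power series `F(x) = 2(x - log(1+x))/x² = ∑_{m≥0} 2(-1)^m x^m/(m+2)`. -/
noncomputable def F : PowerSeries ℝ :=
  PowerSeries.mk fun m => 2 * (-1 : ℝ) ^ m / ((m : ℝ) + 2)

/-- For real `ρ`, the formal power series `F^ρ := ∑_{k≥0} C(ρ,k) (F-1)^k`; since `F - 1`
has zero constant term, the coefficient of `x^n` only involves `k ≤ n`. -/
noncomputable def Fpow (ρ : ℝ) : PowerSeries ℝ :=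
  PowerSeries.mk fun n =>
    ∑ k ∈ Finset.range (n + 1), gbinomR ρ k * PowerSeries.coeff n ((F - 1) ^ k)

/-- The `n`-th Stirling coefficient:
`γ_n = ((-1)^n (2n)!/(2^n n!)) · [x^{2n}] F^{-(n+1/2)}`. -/
noncomputable def stirlingCoeff (n : ℕ) : ℝ :=
  ((-1 : ℝ) ^ n * (Nat.factorial (2 * n) : ℝ) / (2 ^ n * (Nat.factorial n : ℝ))) *
    PowerSeries.coeff (2 * n) (Fpow (-((n : ℝ) + 1 / 2)))

/-- The Stirling numbers of the second kind: `S(0,0) = 1`, `S(n,j) = 0` for `j > n` or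
(`n ≥ 1` and `j = 0`), and `S(n+1,j) = S(n,j-1) + j·S(n,j)`. -/
def stirling2 : ℕ → ℕ → ℕ
  | 0, 0 => 1
  | 0, _ + 1 => 0
  | _ + 1, 0 => 0
  | n + 1, j + 1 => stirling2 n j + (j + 1) * stirling2 n (j + 1)

/-!
Under the substitution `x = exp y - 1` the series `x² F(x) = 2 (x - log (1 + x))` becomes
`y² E(y) = 2 (exp y - 1 - y)`. Invariance of formal residues therefore turns the coefficient of
`x ^ m` in `F ^ (-(m + 1) / 2)` into the coefficient of `y ^ m` in `E ^ (-(m + 1) / 2) * exp y`.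
As `exp y dy = dy + d(y² E) / 2`, the factor `exp y` can be dropped: the other term contributes
only the residue of the exact differential `(y² E) ^ (-(m + 1) / 2) * d(y² E)`. The formula follows
by expanding `E ^ (-(m + 1) / 2)` in powers of `E - 1`, those in powers of `E`, and
`(y E / 2) ^ j = ((exp y - 1) / y - 1) ^ j` in powers of `(exp y - 1) / y`, whose coefficients are
Stirling numbers of the second kind.
-/

open PowerSeries

section ChangeOfVariables

variable {R : Type*} [CommRing R] {B : R⟦X⟧}

lemma coeff_subst_eq_sum_range (hB : constantCoeff B = 0) (A : R⟦X⟧) {n N : ℕ} (hn : n ≤ N) :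
    coeff n (A.subst B) = ∑ k ∈ range (N + 1), coeff k A * coeff n (B ^ k) := by
  rw [coeff_subst' (HasSubst.of_constantCoeff_zero' hB)]
  refine finsum_eq_sum_of_support_subset _ (Function.support_subset_iff'.2 fun k hk ↦ ?_)
  have hNk : N + 1 ≤ k := by simpa using hk
  have hnk : n < k := by lia
  have hcoeff : coeff n (B ^ k) = 0 := coeff_of_lt_order n <|
    (Nat.cast_lt.2 hnk).trans_le (le_order_pow_of_constantCoeff_eq_zero k hB)
  simp [hcoeff]

lemma constantCoeff_subst_eq (hB : constantCoeff B = 0) (A : R⟦X⟧) :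
    constantCoeff (A.subst B : R⟦X⟧) = constantCoeff A := by
  rw [← coeff_zero_eq_constantCoeff_apply, coeff_subst_eq_sum_range hB A le_rfl]
  simp

lemma coeff_subst_mul_eq_sum_range (hB : constantCoeff B = 0) (A D : R⟦X⟧) (n : ℕ) :
    coeff n (A.subst B * D) = ∑ k ∈ range (n + 1), coeff k A * coeff n (B ^ k * D) := by
  simp_rw [coeff_mul, mul_sum]
  rw [sum_comm]
  refine sum_congr rfl fun ij hij ↦ ?_
  rw [coeff_subst_eq_sum_range hB A (HasAntidiagonal.antidiagonal.fst_le hij), sum_mul]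
  simp_rw [mul_assoc]

lemma coeff_X_mul_derivative (A : R⟦X⟧) (n : ℕ) :
    coeff n (X * d⁄dX R A) = n * coeff n A := by
  cases n with
  | zero => simp
  | succ n => rw [coeff_succ_X_mul, coeff_derivative, Nat.cast_succ, mul_comm]

variable [IsAddTorsionFree R] {e f : R⟦X⟧}

lemma coeff_derivative_X_mul_mul_pow (hef : e * f = 1) (n : ℕ) :
    coeff n (d⁄dX R (X * e) * f ^ (n + 1)) = if n = 0 then 1 else 0 := by
  have hD : d⁄dX R (X * e) = e + X * d⁄dX R e := by
    simp [Derivation.leibniz, add_comm]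
  cases n with
  | zero => simpa [hD] using congrArg constantCoeff hef
  | succ n =>
    rw [if_neg n.succ_ne_zero]
    have hf' : d⁄dX R e * f ^ 2 = -d⁄dX R f := by
      have h := congrArg (d⁄dX R) hef
      simp only [Derivation.leibniz, smul_eq_mul, derivative_one] at h
      linear_combination f * h - d⁄dX R f * hef
    have hexact : (n + 1) • (d⁄dX R (X * e) * f ^ (n + 1 + 1)) =
        (n + 1) • f ^ (n + 1) - X * d⁄dX R (f ^ (n + 1)) := by
      rw [hD, derivative_pow, Nat.add_sub_cancel, nsmul_eq_mul, nsmul_eq_mul]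
      linear_combination ((n + 1 : ℕ) : R⟦X⟧) * (f ^ (n + 1) * hef + X * f ^ n * hf')
    refine (nsmul_right_inj n.succ_ne_zero).1 ?_
    rw [smul_zero, ← map_nsmul, hexact, map_sub, map_nsmul, coeff_X_mul_derivative, nsmul_eq_mul,
      sub_self]

lemma coeff_X_mul_pow_mul_derivative_mul_pow (hef : e * f = 1) {k n : ℕ} (hk : k ≤ n) :
    coeff n ((X * e) ^ k * (d⁄dX R (X * e) * f ^ (n + 1))) = if k = n then 1 else 0 := by
  obtain ⟨d, rfl⟩ := Nat.exists_eq_add_of_le' hk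
  have hcancel : (X * e) ^ k * (d⁄dX R (X * e) * f ^ (d + k + 1)) =
      X ^ k * (d⁄dX R (X * e) * f ^ (d + 1)) :=
    calc _ = (e * f) ^ k * (X ^ k * (d⁄dX R (X * e) * f ^ (d + 1))) := by ring
      _ = _ := by rw [hef, one_pow, one_mul]
  rw [hcancel, coeff_X_pow_mul, coeff_derivative_X_mul_mul_pow hef]
  simp

/-- The residue of `A(x) dx / x ^ (n + 1)` is unchanged by the substitution `x = y * e(y)`. -/
theorem coeff_subst_mul_derivative_mul_pow (hef : e * f = 1) (A : R⟦X⟧) (n : ℕ) :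
    coeff n (A.subst (X * e) * (d⁄dX R (X * e) * f ^ (n + 1))) = coeff n A := by
  rw [coeff_subst_mul_eq_sum_range (by simp)]
  calc _ = ∑ k ∈ range (n + 1), coeff k A * if k = n then 1 else 0 :=
        sum_congr rfl fun k hk ↦ by
          rw [coeff_X_mul_pow_mul_derivative_mul_pow hef (mem_range_succ_iff.1 hk)]
    _ = _ := by simp

end ChangeOfVariables

section BinomialPow

variable {R : Type*} [CommRing R] {A B : R⟦X⟧}

lemma hasSubst_sub_one (hA : constantCoeff A = 1) : HasSubst (A - 1) :=
  HasSubst.of_constantCoeff_zero' (by simp [hA])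

variable [BinomialRing R]

/-- The power `A ^ r` of a power series `A` with constant coefficient `1`, for an exponent `r` in
the coefficient ring, defined by the binomial series in `A - 1`. It is a junk value if the constant
coefficient of `A - 1` is not nilpotent. -/
noncomputable def binomialPow (A : R⟦X⟧) (r : R) : R⟦X⟧ :=
  (binomialSeries R r).subst (A - 1)

lemma coeff_binomialPow (hA : constantCoeff A = 1) (r : R) (n : ℕ) :
    coeff n (binomialPow A r) =
      ∑ k ∈ range (n + 1), Ring.choose r k * coeff n ((A - 1) ^ k) := by
  rw [binomialPow, coeff_subst_eq_sum_range (by simp [hA]) _ le_rfl]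
  simp

lemma constantCoeff_binomialPow (hA : constantCoeff A = 1) (r : R) :
    constantCoeff (binomialPow A r) = 1 := by
  rw [binomialPow, constantCoeff_subst_eq (by simp [hA]), binomialSeries_constantCoeff]

lemma binomialPow_add (hA : constantCoeff A = 1) (r s : R) :
    binomialPow A (r + s) = binomialPow A r * binomialPow A s := by
  simp only [binomialPow, binomialSeries_add, subst_mul (hasSubst_sub_one hA)]

lemma binomialPow_natCast (hA : constantCoeff A = 1) (n : ℕ) :
    binomialPow A (n : R) = A ^ n := by
  have hs := hasSubst_sub_one hA
  rw [binomialPow, binomialSeries_nat, ← coe_substAlgHom hs, map_pow, map_add, map_one,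
    substAlgHom_X hs, add_sub_cancel]

lemma binomialPow_zero (hA : constantCoeff A = 1) : binomialPow A 0 = 1 := by
  simpa using binomialPow_natCast hA 0

lemma binomialPow_one (hA : constantCoeff A = 1) : binomialPow A 1 = A := by
  simpa using binomialPow_natCast hA 1

lemma one_binomialPow (r : R) : binomialPow (1 : R⟦X⟧) r = 1 := by
  simp [binomialPow, subst_zero_eq_C_constantCoeff]

lemma binomialPow_mul_neg (hA : constantCoeff A = 1) (r : R) :
    binomialPow A r * binomialPow A (-r) = 1 := by
  rw [← binomialPow_add hA, add_neg_cancel, binomialPow_zero hA]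

lemma binomialPow_eq_mul_sub_one (hA : constantCoeff A = 1) (r : R) :
    binomialPow A r = A * binomialPow A (r - 1) := by
  nth_rw 2 [← binomialPow_one hA]
  rw [← binomialPow_add hA, add_sub_cancel]

lemma binomialPow_natCast_mul (hA : constantCoeff A = 1) (n : ℕ) (r : R) :
    binomialPow A (n * r) = binomialPow A r ^ n := by
  induction n with
  | zero => simp [binomialPow_zero hA]
  | succ n ih => rw [Nat.cast_succ, add_one_mul, binomialPow_add hA, ih, pow_succ]

lemma subst_binomialPow (hA : constantCoeff A = 1) (hB : constantCoeff B = 0) (r : R) :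
    (binomialPow A r).subst B = binomialPow (A.subst B) r := by
  have hs := HasSubst.of_constantCoeff_zero' hB
  have h1 : (1 : R⟦X⟧).subst B = (1 : R⟦X⟧) := by rw [← coe_substAlgHom hs, map_one]
  rw [binomialPow, subst_comp_subst_apply (hasSubst_sub_one hA) hs, subst_sub hs, h1, binomialPow]

lemma derivative_binomialSeries (r : R) :
    d⁄dX R (binomialSeries R r) = C r * binomialSeries R (r - 1) := by
  ext n
  have h := Ring.choose_add_smul_choose (r - 1) n 1
  simp only [Nat.choose_one_right, Nat.cast_one, sub_add_cancel, Ring.choose_one_right,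
    nsmul_eq_mul] at h
  simpa [coeff_derivative, mul_comm] using h

lemma derivative_binomialPow (hA : constantCoeff A = 1) (r : R) :
    d⁄dX R (binomialPow A r) = C r * binomialPow A (r - 1) * d⁄dX R A := by
  have hs := hasSubst_sub_one hA
  have hC : (C r).subst (A - 1) = C r := subst_C r
  rw [binomialPow, derivative_subst hs, derivative_binomialSeries, subst_mul hs, hC, map_sub,
    derivative_one, sub_zero, binomialPow]

lemma mul_binomialPow (hA : constantCoeff A = 1) (hB : constantCoeff B = 1) (r : R) :
    binomialPow (A * B) r = binomialPow A r * binomialPow B r := by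
  have := BinomialRing.toIsAddTorsionFree (R := R)
  have hAB : constantCoeff (A * B) = 1 := by simp [hA, hB]
  have hquot : binomialPow A r * binomialPow B r * binomialPow (A * B) (-r) = 1 := by
    refine derivative.ext ?_ (by simp [constantCoeff_binomialPow, hA, hB])
    simp only [Derivation.leibniz, derivative_binomialPow hA, derivative_binomialPow hB,
      derivative_binomialPow hAB, smul_eq_mul, derivative_one]
    rw [binomialPow_eq_mul_sub_one hA r, binomialPow_eq_mul_sub_one hB r,
      binomialPow_eq_mul_sub_one hAB (-r), map_neg]
    ring
  linear_combination binomialPow A r * binomialPow B r * binomialPow_mul_neg hAB r -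
    binomialPow (A * B) r * hquot

lemma pow_binomialPow (hA : constantCoeff A = 1) (n : ℕ) (r : R) :
    binomialPow (A ^ n) r = binomialPow A r ^ n := by
  induction n with
  | zero => simp [one_binomialPow]
  | succ n ih => rw [pow_succ, mul_binomialPow (by simp [hA]) hA, ih, pow_succ]

/-- The factor `1 / e ^ (n + 1)` produced by the change of variables is `(e ^ p) ^ r` by `hr`. -/
theorem coeff_binomialPow_eq_coeff_mul_derivative {e : R⟦X⟧} (hA : constantCoeff A = 1)
    (he : constantCoeff e = 1) {n p : ℕ} {r : R} (hr : p * r = -(n + 1)) :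
    coeff n (binomialPow A r) =
      coeff n (binomialPow (A.subst (X * e) * e ^ p) r * d⁄dX R (X * e)) := by
  have := BinomialRing.toIsAddTorsionFree (R := R)
  have hX : constantCoeff (X * e) = 0 := by simp
  have hinv : e * binomialPow e (-1) = 1 := by
    simpa [binomialPow_one he] using binomialPow_mul_neg he 1
  have hpow : binomialPow e (-1) ^ (n + 1) = binomialPow (e ^ p) r := by
    rw [← binomialPow_natCast_mul he, pow_binomialPow he, ← binomialPow_natCast_mul he, hr]
    simp
  rw [← coeff_subst_mul_derivative_mul_pow hinv, hpow, subst_binomialPow hA hX,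
    mul_binomialPow (by rw [constantCoeff_subst_eq hX, hA]) (by simp [he])]
  ring_nf

/-- A residue computation: up to a power of `X`, the series is the derivative of
`(X ^ (p + 1) * A) ^ (r + 1)`, whose exponent of `X` is `p - n`. -/
theorem coeff_binomialPow_mul_derivative_eq_zero [IsDomain R] (hA : constantCoeff A = 1)
    {n p : ℕ} {r : R} (hr : (p + 1) * r = -(n + 1)) (hr1 : r ≠ -1) :
    coeff n (binomialPow A r * d⁄dX R (X ^ (p + 1) * A)) = 0 := by
  set P := binomialPow A (r + 1) with hP
  have hPr : P = A * binomialPow A r := by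
    rw [hP, binomialPow_eq_mul_sub_one hA, add_sub_cancel_right]
  have hP' : d⁄dX R P = C (r + 1) * binomialPow A r * d⁄dX R A := by
    rw [hP, derivative_binomialPow hA, add_sub_cancel_right]
  have hexact : C (r + 1) * (binomialPow A r * d⁄dX R (X ^ (p + 1) * A)) =
      X ^ p * (C ((r + 1) * (p + 1)) * P + X * d⁄dX R P) := by
    rw [Derivation.leibniz, derivative_pow, derivative_X, hP', hPr]
    simp only [smul_eq_mul, map_mul, map_add, map_one, map_natCast, Nat.add_sub_cancel]
    push_cast
    ring
  refine (mul_eq_zero.1 ?_).resolve_left fun h ↦ hr1 (eq_neg_of_add_eq_zero_left h)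
  rw [← coeff_C_mul, hexact, coeff_X_pow_mul', ite_eq_right_iff]
  intro hpn
  rw [map_add, coeff_C_mul, coeff_X_mul_derivative, Nat.cast_sub hpn]
  linear_combination coeff (n - p) P * hr

end BinomialPow

section ExpTail

variable (K : Type*) [Field K]

/-- The normalized tail `k! * (exp y - ∑ i < k, y ^ i / i!) / y ^ k` of the exponential series. -/
noncomputable def expTail (k : ℕ) : K⟦X⟧ :=
  PowerSeries.mk fun m ↦ k.factorial / (m + k).factorial

variable [CharZero K]

lemma constantCoeff_expTail (k : ℕ) : constantCoeff (expTail K k) = 1 := by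
  have hk : (k.factorial : K) ≠ 0 := Nat.cast_ne_zero.2 k.factorial_ne_zero
  simp [← coeff_zero_eq_constantCoeff_apply, expTail, hk]

lemma X_mul_expTail_succ (k : ℕ) :
    X * expTail K (k + 1) = ((k + 1 : ℕ) : K⟦X⟧) * (expTail K k - 1) := by
  ext n
  rw [← nsmul_eq_mul, map_nsmul]
  cases n with
  | zero => simp [constantCoeff_expTail]
  | succ n =>
    rw [coeff_succ_X_mul, map_sub, coeff_one, if_neg n.succ_ne_zero, sub_zero, expTail, expTail,
      coeff_mk, coeff_mk, Nat.factorial_succ, add_right_comm n 1 k, ← add_assoc]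
    simp [mul_div_assoc]

lemma derivative_X_pow_mul_expTail_succ (k : ℕ) :
    d⁄dX K (X ^ (k + 1) * expTail K (k + 1)) =
      ((k + 1 : ℕ) : K⟦X⟧) * (X ^ k * expTail K k) := by
  ext n
  rw [← nsmul_eq_mul, map_nsmul, coeff_derivative, coeff_X_pow_mul', coeff_X_pow_mul']
  by_cases hkn : k ≤ n
  · obtain ⟨d, rfl⟩ := Nat.exists_eq_add_of_le' hkn
    have hd : ((d + k).factorial : K) ≠ 0 := Nat.cast_ne_zero.2 (Nat.factorial_ne_zero _)
    have hd' : (d + k + 1 : K) ≠ 0 := by exact_mod_cast Nat.succ_ne_zero (d + k)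
    rw [if_pos (by lia), if_pos hkn, Nat.add_sub_add_right, Nat.add_sub_cancel, expTail, expTail,
      coeff_mk, coeff_mk, ← add_assoc, Nat.factorial_succ, Nat.factorial_succ, nsmul_eq_mul]
    push_cast
    field_simp
  · simp [hkn]

lemma derivative_X_mul_expTail_one :
    d⁄dX K (X * expTail K 1) = 1 + X * expTail K 1 := by
  have h := derivative_X_pow_mul_expTail_succ K 0
  have h' := X_mul_expTail_succ K 0
  simp only [zero_add, pow_one, pow_zero, one_mul, Nat.cast_one] at h h'
  rw [h, h', add_sub_cancel]

lemma derivative_X_sq_mul_expTail_two :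
    d⁄dX K (X ^ 2 * expTail K 2) = 2 * (X * expTail K 1) := by
  simpa [one_add_one_eq_two] using derivative_X_pow_mul_expTail_succ K 1

lemma coeff_X_mul_expTail_one_pow (i m : ℕ) :
    coeff m ((X * expTail K 1) ^ i) = (i.factorial * stirling2 m i / m.factorial : K) := by
  induction m generalizing i with
  | zero => cases i <;> simp [stirling2]
  | succ m ih =>
    cases i with
    | zero => simp [stirling2, coeff_one]
    | succ i =>
      have hm : (m + 1 : K) ≠ 0 := by exact_mod_cast m.succ_ne_zero
      have hm' : (m.factorial : K) ≠ 0 := Nat.cast_ne_zero.2 m.factorial_ne_zero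
      have hD : d⁄dX K ((X * expTail K 1) ^ (i + 1)) =
          (i + 1) • ((X * expTail K 1) ^ i + (X * expTail K 1) ^ (i + 1)) := by
        rw [derivative_pow, derivative_X_mul_expTail_one, Nat.add_sub_cancel, nsmul_eq_mul]
        ring
      have hcoeff := congrArg (coeff m) hD
      rw [coeff_derivative, map_nsmul, map_add, ih, ih, ← eq_div_iff hm] at hcoeff
      rw [hcoeff]
      simp only [stirling2, Nat.factorial_succ, nsmul_eq_mul]
      push_cast
      field_simp

lemma coeff_expTail_one_pow (i m : ℕ) :
    coeff m (expTail K 1 ^ i) = (i.factorial * stirling2 (m + i) i / (m + i).factorial : K) := by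
  rw [← coeff_X_mul_expTail_one_pow, mul_pow, coeff_X_pow_mul]

variable {K}

lemma coeff_one_sub_pow_div_factorial (A : K⟦X⟧) (n k : ℕ) :
    coeff n ((1 - A) ^ k) / k.factorial =
      ∑ j ∈ range (k + 1),
        (-1) ^ j / (j.factorial * (k - j).factorial) * coeff n (A ^ j) := by
  rw [sub_eq_neg_add, add_pow, map_sum, sum_div]
  refine sum_congr rfl fun j hj ↦ ?_
  have hk : (k.factorial : K) ≠ 0 := Nat.cast_ne_zero.2 k.factorial_ne_zero
  have hterm : (-A) ^ j * 1 ^ (k - j) * (k.choose j : K⟦X⟧) =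
      C ((-1) ^ j * (k.choose j : K)) * A ^ j := by
    rw [neg_pow]
    simp only [map_mul, map_pow, map_neg, map_one, map_natCast]
    ring
  rw [hterm, coeff_C_mul, Nat.cast_choose K (mem_range_succ_iff.1 hj)]
  field_simp

lemma sum_stirling2_eq_coeff_expTail_two_pow (n j : ℕ) :
    ∑ i ∈ range (j + 1), (-1 : K) ^ i * stirling2 (n + j + i) i /
        ((j - i).factorial * (n + j + i).factorial) =
      (-1) ^ j / (2 ^ j * j.factorial) * coeff n (expTail K 2 ^ j) := by
  have hpow : C ((-2 : K) ^ j) * (1 - expTail K 1) ^ j = X ^ j * expTail K 2 ^ j := by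
    have h := X_mul_expTail_succ K 1
    rw [← mul_pow, h, map_pow, ← mul_pow]
    congr 1
    simp only [map_neg, map_ofNat]
    push_cast
    ring
  have hcoeff : coeff n (expTail K 2 ^ j) = (-2) ^ j * coeff (n + j) ((1 - expTail K 1) ^ j) := by
    rw [← coeff_C_mul, hpow, coeff_X_pow_mul]
  calc _ = coeff (n + j) ((1 - expTail K 1) ^ j) / (j.factorial : K) := by
        rw [coeff_one_sub_pow_div_factorial]
        refine sum_congr rfl fun i _ ↦ ?_
        have hi : (i.factorial : K) ≠ 0 := Nat.cast_ne_zero.2 i.factorial_ne_zero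
        rw [coeff_expTail_one_pow]
        field_simp
    _ = _ := by
        have hsign : (-1 : K) ^ j * (-2) ^ j = 2 ^ j := by rw [← mul_pow, neg_one_mul, neg_neg]
        rw [hcoeff, ← mul_assoc, div_mul_eq_mul_div, hsign]
        field_simp

lemma sum_sum_stirling2_eq_coeff_expTail_two_sub_one_pow (n k : ℕ) :
    ∑ j ∈ range (k + 1), (2 : K) ^ j / (k - j).factorial *
        ∑ i ∈ range (j + 1), (-1 : K) ^ i * stirling2 (n + j + i) i /
          ((j - i).factorial * (n + j + i).factorial) =
      (-1) ^ k / k.factorial * coeff n ((expTail K 2 - 1) ^ k) := by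
  have hneg : coeff n ((1 - expTail K 2) ^ k) = (-1) ^ k * coeff n ((expTail K 2 - 1) ^ k) := by
    rw [← neg_sub, neg_pow, ← coeff_C_mul]
    simp
  rw [div_mul_eq_mul_div, ← hneg, coeff_one_sub_pow_div_factorial]
  refine sum_congr rfl fun j _ ↦ ?_
  rw [sum_stirling2_eq_coeff_expTail_two_pow]
  field_simp

end ExpTail

section StirlingSeries

lemma constantCoeff_F : constantCoeff F = 1 := by
  simp [← coeff_zero_eq_constantCoeff_apply, F]

lemma X_sq_mul_F : X ^ 2 * F = 2 * (X - log ℝ) := by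
  ext n
  rw [two_mul, ← two_nsmul, map_nsmul, coeff_X_pow_mul']
  rcases n with _ | _ | n
  · simp
  · simp
  · have hlog : coeff (n + 2) (log ℝ) = (-1) ^ (n + 1) / ((n : ℝ) + 2) := by
      simp [add_assoc, pow_succ]
    rw [if_pos (by lia), Nat.add_sub_cancel (n := n) (m := 2), map_sub, coeff_X,
      if_neg (by lia), hlog, F, coeff_mk, nsmul_eq_mul, pow_succ]
    push_cast
    ring

lemma derivative_log_mul_one_add_X (A : Type*) [CommRing A] [Algebra ℚ A] :
    d⁄dX A (log A) * (1 + X) = 1 := by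
  ext n
  rw [mul_add, mul_one, deriv_log]
  cases n with
  | zero => simp
  | succ n => simp [coeff_succ_mul_X, coeff_one, pow_succ]

lemma derivative_X_sq_mul_F_mul_one_add_X : d⁄dX ℝ (X ^ 2 * F) * (1 + X) = 2 * X := by
  have h2 : d⁄dX ℝ (2 * (X - log ℝ)) = 2 * (1 - d⁄dX ℝ (log ℝ)) := by
    rw [two_mul, map_add, map_sub, derivative_X, two_mul]
  rw [X_sq_mul_F, h2]
  linear_combination (-2) * derivative_log_mul_one_add_X ℝ

lemma F_subst_mul_expTail_one_sq :
    F.subst (X * expTail ℝ 1) * expTail ℝ 1 ^ 2 = expTail ℝ 2 := by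
  have hs : HasSubst (X * expTail ℝ 1) := HasSubst.of_constantCoeff_zero' (by simp)
  have hsubst : (X ^ 2 * F).subst (X * expTail ℝ 1) = X ^ 2 * expTail ℝ 2 := by
    refine derivative.ext ?_ (by simp [constantCoeff_subst_eq])
    have h := congrArg (substAlgHom (R := ℝ) hs) derivative_X_sq_mul_F_mul_one_add_X
    simp only [map_mul, map_add, map_one, map_ofNat, substAlgHom_X] at h
    rw [derivative_subst hs, derivative_X_mul_expTail_one, derivative_X_sq_mul_expTail_two, ← h,
      coe_substAlgHom]
  refine mul_left_cancel₀ (pow_ne_zero 2 X_ne_zero) ?_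
  rw [← hsubst, subst_mul hs, subst_pow hs, subst_X hs]
  ring

theorem coeff_binomialPow_F_eq {m : ℕ} (hm : m ≠ 1) :
    coeff m (binomialPow F (-(m + 1) / 2)) =
      coeff m (binomialPow (expTail ℝ 2) (-(m + 1) / 2)) := by
  have hr : -(m + 1 : ℝ) / 2 ≠ -1 := fun h ↦ hm <| by
    have hm' : (m : ℝ) = 1 := by linarith
    exact_mod_cast hm'
  have hzero := coeff_binomialPow_mul_derivative_eq_zero (constantCoeff_expTail ℝ 2) (n := m)
    (p := 1) (by push_cast; ring) hr
  rw [one_add_one_eq_two, derivative_X_sq_mul_expTail_two, mul_left_comm, two_mul, map_add,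
    add_self_eq_zero] at hzero
  rw [coeff_binomialPow_eq_coeff_mul_derivative constantCoeff_F (constantCoeff_expTail ℝ 1) (p := 2)
    (by push_cast; ring), F_subst_mul_expTail_one_sq, derivative_X_mul_expTail_one, mul_add,
    mul_one, map_add, hzero, add_zero]

lemma gbinomR_eq_choose (ρ : ℝ) (k : ℕ) : gbinomR ρ k = Ring.choose ρ k := by
  have heval : (descPochhammer ℤ k).smeval ρ = ∏ i ∈ range k, (ρ - i) := by
    rw [← Polynomial.aeval_eq_smeval, Polynomial.aeval_def, Polynomial.eval₂_eq_eval_map,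
      descPochhammer_map, descPochhammer_eval_eq_prod_range]
  rw [gbinomR, Ring.choose_eq_smul, heval, smul_eq_mul, div_eq_inv_mul]

lemma Fpow_eq_binomialPow (ρ : ℝ) : Fpow ρ = binomialPow F ρ := by
  ext n
  simp only [Fpow, coeff_mk, coeff_binomialPow constantCoeff_F, gbinomR_eq_choose]

end StirlingSeries

section Gamma

lemma Gamma_mul_gbinomR_neg {s : ℝ} (hs : ∀ k : ℕ, s ≠ -k) (k : ℕ) :
    Real.Gamma s * gbinomR (-s) k = (-1) ^ k / k.factorial * Real.Gamma (s + k) := by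
  rw [gbinomR, ← mul_div_assoc, div_mul_eq_mul_div]
  congr 1
  induction k with
  | zero => simp
  | succ k ih =>
    have hk : s + k ≠ 0 := fun h ↦ hs k (eq_neg_of_add_eq_zero_left h)
    rw [prod_range_succ, ← mul_assoc, ih, Nat.cast_succ, ← add_assoc, Real.Gamma_add_one hk]
    ring

lemma factorial_two_mul_div_eq_Gamma (n : ℕ) :
    ((2 * n).factorial : ℝ) / (2 ^ n * n.factorial) =
      2 ^ n * Real.Gamma (n + 1 / 2) / Real.sqrt Real.pi := by
  have hfact : (2 * n).factorial = 2 ^ n * n.factorial * (2 * n - 1).doubleFactorial := by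
    cases n with
    | zero => rfl
    | succ n =>
      rw [← Nat.doubleFactorial_two_mul]
      exact Nat.factorial_eq_mul_doubleFactorial (2 * n + 1)
  rw [Real.Gamma_nat_add_half, hfact]
  push_cast
  field_simp

end Gamma

/-- Representation of the Stirling coefficients in terms of the Stirling numbers of the
second kind (formula (22) of the paper). -/
theorem stirlingCoeff_eq_triple_sum_stirling2 (n : ℕ) :
    stirlingCoeff n =
      ∑ k ∈ Finset.range (2 * n + 1),
        ((-1 : ℝ) ^ n * 2 ^ n * Real.Gamma ((n : ℝ) + k + 1 / 2) / Real.sqrt Real.pi) *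
          ∑ j ∈ Finset.range (k + 1),
            (2 : ℝ) ^ j / (Nat.factorial (k - j) : ℝ) *
              ∑ i ∈ Finset.range (j + 1),
                (-1 : ℝ) ^ i * (stirling2 (2 * n + j + i) i : ℝ) /
                  ((Nat.factorial (j - i) : ℝ) * (Nat.factorial (2 * n + j + i) : ℝ)) := by
  have hr : -((n : ℝ) + 1 / 2) = -((2 * n : ℕ) + 1) / 2 := by push_cast; ring
  have hs (k : ℕ) : (n : ℝ) + 1 / 2 ≠ -k := by
    have : (0 : ℝ) < n + 1 / 2 + k := by positivity
    linarith
  rw [stirlingCoeff, Fpow_eq_binomialPow, hr, coeff_binomialPow_F_eq (by lia), ← hr,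
    coeff_binomialPow (constantCoeff_expTail ℝ 2), mul_sum]
  refine sum_congr rfl fun k _ ↦ ?_
  rw [sum_sum_stirling2_eq_coeff_expTail_two_sub_one_pow, ← gbinomR_eq_choose]
  calc _ = (-1) ^ n * 2 ^ n * (Real.Gamma (n + 1 / 2) * gbinomR (-(n + 1 / 2)) k) /
          Real.sqrt Real.pi * coeff (2 * n) ((expTail ℝ 2 - 1) ^ k) := by
        rw [mul_div_assoc, factorial_two_mul_div_eq_Gamma]
        ring
    _ = _ := by
        rw [Gamma_mul_gbinomR_neg hs, add_right_comm]
        ring
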